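/- Under the stated assumptions, for every t ≥ 1 the BFGS iterates satisfy Σ_{i=0}^{t−1} D_i ≤ D₀·(Ψ(B̄₀) + 3(1+D₀)²/(α(1−β))). -/

import Mathlib

/-! Write `H = ∇²f(x_*)`, `L = 1 + D₀`, and measure everything in the metric of `P = L H`.

Strong self-concordance gives `f(x) - f(x_*) ≥ (4/M²) ω(M‖x - x_*‖_* / 2)` (`omegaFn_dist_le`), that
is `M‖x_t - x_*‖_* ≤ D_t`. The Armijo condition makes `C_t`, hence `D_t`, nonincreasing, so all the
iterates and the segments between them lie in a region where `H / L ⪯ ∇²f ⪯ L H`. Consequences are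
the cocoercivity `yᵀP⁻¹y ≤ sᵀy` (`gradDiff_cocoercive`) and the gradient bound
`C ≤ (L/2) gᵀH⁻¹g` (`gap_le_grad`).

The potential `Φ_t = Ψ(P^{-1/2} B_t P^{-1/2})` is nonnegative, and one update changes it by at most
`log u_t`, where `u_t = (gᵀs)² / (gᵀP⁻¹g · sᵀy)` (`Psi_bfgsUpdate_le`). The two line-search
conditions and the gradient bound give `C_{t+1} ≤ C_t (1 - 2ρu_t)` with `ρ = α(1-β)/L²`. A scalar
inequality (`one_sub_le_exp`) bounds `1 - 2ρu` by `q² exp(-c(1 + log u))`, with `q = 1 - ρ/3` and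
some `c > 0`, and the product telescopes to `C_t ≤ C₀ q^{2t} exp(c(Φ₀ - Φ_t - t))`.

So `C_t ≤ q^{2t} C₀` as soon as `t ≥ Φ₀`, and then `D_t ≤ qᵗ D₀` because `ω(x)/x²` is decreasing
(`sq_mul_omegaFn_le`). For smaller `t` one uses `D_t ≤ D₀`, and the sum is at most
`D₀ (Φ₀ + 1/(1-q)) = D₀ (Φ₀ + 3/ρ)`. -/

open Matrix Real Finset

noncomputable section

/-- `ω(x) = x − log(1+x)`. -/
def omegaFn (x : ℝ) : ℝ := x - Real.log (1 + x)

/-- `Ψ(A) = Tr(A) − d − log det A`. -/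
def Psi (d : ℕ) (A : Matrix (Fin d) (Fin d) ℝ) : ℝ :=
  A.trace - (d : ℝ) - Real.log A.det

/-- Loewner order: `A ⪯ B` iff `B − A` is positive semidefinite. -/
def loewnerLE {d : ℕ} (A B : Matrix (Fin d) (Fin d) ℝ) : Prop := (B - A).PosSemidef

/-- The BFGS Hessian-approximation update
`B⁺ = B − (B s sᵀ B)/(sᵀ B s) + (y yᵀ)/(sᵀ y)`. -/
def bfgsUpdate {d : ℕ} (B : Matrix (Fin d) (Fin d) ℝ) (s y : Fin d → ℝ) :
    Matrix (Fin d) (Fin d) ℝ :=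
  B - (s ⬝ᵥ (B *ᵥ s))⁻¹ • vecMulVec (B *ᵥ s) (Bᵀ *ᵥ s) + (s ⬝ᵥ y)⁻¹ • vecMulVec y y

/-- `M`-strong self-concordance of a Hessian field:
`∇²f(x) − ∇²f(y) ⪯ M‖x−y‖_z ∇²f(y)` for all `x, y, z`. -/
def StronglySelfConcordant {d : ℕ} (hess : (Fin d → ℝ) → Matrix (Fin d) (Fin d) ℝ)
    (M : ℝ) : Prop :=
  ∀ x y z : Fin d → ℝ,
    loewnerLE (hess x - hess y)
      ((M * Real.sqrt ((x - y) ⬝ᵥ (hess z *ᵥ (x - y)))) • hess y)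

/-! ### Quadratic forms of real matrices -/

lemma dot_mulVec_symm {d : ℕ} {A : Matrix (Fin d) (Fin d) ℝ} (hA : A.IsHermitian)
    (u v : Fin d → ℝ) : u ⬝ᵥ (A *ᵥ v) = v ⬝ᵥ (A *ᵥ u) := by
  have hT : Aᵀ = A := by rw [← conjTranspose_eq_transpose_of_trivial]; exact hA
  rw [dotProduct_mulVec, ← mulVec_transpose, hT, dotProduct_comm]

lemma quad_nonneg {d : ℕ} {A : Matrix (Fin d) (Fin d) ℝ} (hA : A.PosSemidef)
    (v : Fin d → ℝ) : 0 ≤ v ⬝ᵥ (A *ᵥ v) := by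
  simpa using hA.dotProduct_mulVec_nonneg v

lemma quad_pos {d : ℕ} {A : Matrix (Fin d) (Fin d) ℝ} (hA : A.PosDef)
    {v : Fin d → ℝ} (hv : v ≠ 0) : 0 < v ⬝ᵥ (A *ᵥ v) := by
  simpa using hA.dotProduct_mulVec_pos hv

lemma quad_sub_smul {d : ℕ} {A : Matrix (Fin d) (Fin d) ℝ} (hA : A.IsHermitian)
    (u v : Fin d → ℝ) (c : ℝ) :
    (u - c • v) ⬝ᵥ (A *ᵥ (u - c • v)) =
      u ⬝ᵥ (A *ᵥ u) - 2 * c * (u ⬝ᵥ (A *ᵥ v)) + c ^ 2 * (v ⬝ᵥ (A *ᵥ v)) := by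
  simp only [mulVec_sub, mulVec_smul, sub_dotProduct, dotProduct_sub, smul_dotProduct,
    dotProduct_smul, smul_eq_mul]
  rw [dot_mulVec_symm hA v u]
  ring

/-- Young's inequality for the form of a positive semidefinite matrix. -/
lemma quad_young {d : ℕ} {A : Matrix (Fin d) (Fin d) ℝ} (hA : A.PosSemidef)
    (u v : Fin d → ℝ) (c : ℝ) :
    2 * c * (u ⬝ᵥ (A *ᵥ v)) ≤ u ⬝ᵥ (A *ᵥ u) + c ^ 2 * (v ⬝ᵥ (A *ᵥ v)) := by
  have h := quad_nonneg hA (u - c • v)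
  rw [quad_sub_smul hA.isHermitian] at h
  linarith

lemma quad_cauchy_schwarz {d : ℕ} {A : Matrix (Fin d) (Fin d) ℝ} (hA : A.PosDef)
    (u : Fin d → ℝ) {v : Fin d → ℝ} (hv : v ≠ 0) :
    (u ⬝ᵥ (A *ᵥ v)) ^ 2 / (v ⬝ᵥ (A *ᵥ v)) ≤ u ⬝ᵥ (A *ᵥ u) := by
  have hp := quad_pos hA hv
  have h := quad_young hA.posSemidef u v ((u ⬝ᵥ (A *ᵥ v)) / (v ⬝ᵥ (A *ᵥ v)))
  have e : (u ⬝ᵥ (A *ᵥ v) / (v ⬝ᵥ (A *ᵥ v))) ^ 2 * (v ⬝ᵥ (A *ᵥ v)) =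
      (u ⬝ᵥ (A *ᵥ v)) ^ 2 / (v ⬝ᵥ (A *ᵥ v)) := by field_simp
  have e' : 2 * (u ⬝ᵥ (A *ᵥ v) / (v ⬝ᵥ (A *ᵥ v))) * (u ⬝ᵥ (A *ᵥ v)) =
      2 * ((u ⬝ᵥ (A *ᵥ v)) ^ 2 / (v ⬝ᵥ (A *ᵥ v))) := by ring
  rw [e, e'] at h
  linarith

/-- `Ψ(A) = ∑ (λ - 1 - log λ)` over the eigenvalues of `A`, and every term is nonnegative. -/
lemma Psi_nonneg {d : ℕ} {A : Matrix (Fin d) (Fin d) ℝ} (hA : A.PosDef) : 0 ≤ Psi d A := by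
  have hdet := hA.isHermitian.det_eq_prod_eigenvalues
  have htr := hA.isHermitian.trace_eq_sum_eigenvalues
  have hpos := hA.eigenvalues_pos
  simp only [RCLike.ofReal_real_eq_id, id_eq] at hdet htr
  have hd : (d : ℝ) = ∑ _i : Fin d, (1 : ℝ) := by simp
  rw [Psi, htr, hdet, Real.log_prod (fun i _ => (hpos i).ne'), hd, ← Finset.sum_sub_distrib,
    ← Finset.sum_sub_distrib]
  refine Finset.sum_nonneg fun i _ => ?_
  linarith [Real.log_le_sub_one_of_pos (hpos i)]

/-! ### The BFGS update -/

/-- The update multiplies the determinant by `sᵀy / sᵀBs`: it is a rank-two perturbation, so the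
matrix determinant lemma reduces the claim to a `2 × 2` determinant. -/
lemma det_bfgsUpdate {d : ℕ} {B : Matrix (Fin d) (Fin d) ℝ} (hB : B.PosDef)
    {s y : Fin d → ℝ} (hs : s ≠ 0) (hsy : 0 < s ⬝ᵥ y) :
    (bfgsUpdate B s y).det = B.det * ((s ⬝ᵥ y) / (s ⬝ᵥ (B *ᵥ s))) := by
  have hσ := quad_pos hB hs
  have hT : Bᵀ = B := by rw [← conjTranspose_eq_transpose_of_trivial]; exact hB.isHermitian
  have hu : IsUnit B.det := hB.det_pos.ne'.isUnit
  set σ := s ⬝ᵥ (B *ᵥ s) with hσd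
  set κ := s ⬝ᵥ y with hκ
  let U : Matrix (Fin d) (Fin 2) ℝ := (Matrix.of ![-σ⁻¹ • (B *ᵥ s), κ⁻¹ • y])ᵀ
  let V : Matrix (Fin 2) (Fin d) ℝ := Matrix.of ![B *ᵥ s, y]
  have e : bfgsUpdate B s y = B + U * V := by
    ext i j
    simp [bfgsUpdate, hT, U, V, Matrix.mul_apply, Fin.sum_univ_two, vecMulVec_apply, ← hσd, ← hκ]
    ring
  have hVB : V * B⁻¹ = Matrix.of ![s, B⁻¹ *ᵥ y] := by
    have hTi : (B⁻¹)ᵀ = B⁻¹ := by rw [transpose_nonsing_inv, hT]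
    have h1 : (B *ᵥ s) ᵥ* B⁻¹ = s := by
      rw [← mulVec_transpose, hTi, mulVec_mulVec, nonsing_inv_mul _ hu, one_mulVec]
    have h2 : y ᵥ* B⁻¹ = B⁻¹ *ᵥ y := by rw [← mulVec_transpose, hTi]
    ext i j
    fin_cases i
    · exact congrFun h1 j
    · exact congrFun h2 j
  have hyi : (B⁻¹ *ᵥ y) ⬝ᵥ (B *ᵥ s) = κ := by
    rw [dot_mulVec_symm hB.isHermitian, mulVec_mulVec, mul_nonsing_inv _ hu, one_mulVec]
  have hW : V * B⁻¹ * U = !![-σ⁻¹ * σ, κ⁻¹ * κ; -σ⁻¹ * κ, κ⁻¹ * ((B⁻¹ *ᵥ y) ⬝ᵥ y)] := by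
    rw [hVB]
    have key : ∀ i j, (Matrix.of ![s, B⁻¹ *ᵥ y] * U) i j =
        (![s, B⁻¹ *ᵥ y] i) ⬝ᵥ (![-σ⁻¹ • (B *ᵥ s), κ⁻¹ • y] j) := fun i j => rfl
    ext i j
    rw [key]
    fin_cases i <;> fin_cases j <;> simp [← hσd, ← hκ, hyi]
  rw [e, det_add_mul U V hu, hW, det_fin_two]
  simp [hsy.ne', hσ.ne']
  left; field_simp

lemma posDef_bfgsUpdate {d : ℕ} {B : Matrix (Fin d) (Fin d) ℝ} (hB : B.PosDef)
    {s y : Fin d → ℝ} (hs : s ≠ 0) (hsy : 0 < s ⬝ᵥ y) :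
    (bfgsUpdate B s y).PosDef := by
  have hσ := quad_pos hB hs
  have hT : Bᵀ = B := by rw [← conjTranspose_eq_transpose_of_trivial]; exact hB.isHermitian
  -- Semidefiniteness is Cauchy–Schwarz; strictness then follows from the nonzero determinant.
  have hpsd : (bfgsUpdate B s y).PosSemidef := by
    refine PosSemidef.of_dotProduct_mulVec_nonneg ?_ fun v => ?_
    · rw [IsHermitian, conjTranspose_eq_transpose_of_trivial]
      simp [bfgsUpdate, hT, transpose_vecMulVec]
    · have hcs := quad_cauchy_schwarz hB v hs
      have e : star v ⬝ᵥ (bfgsUpdate B s y *ᵥ v) = v ⬝ᵥ (B *ᵥ v)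
          - (v ⬝ᵥ (B *ᵥ s)) ^ 2 / (s ⬝ᵥ (B *ᵥ s)) + (s ⬝ᵥ y)⁻¹ * (v ⬝ᵥ y) ^ 2 := by
        simp [bfgsUpdate, hT, add_mulVec, sub_mulVec, smul_mulVec, vecMulVec_mulVec,
          dotProduct_add, dotProduct_sub]
        rw [dotProduct_comm (B *ᵥ s) v, dotProduct_comm y v]
        ring
      rw [e]
      have : 0 ≤ (s ⬝ᵥ y)⁻¹ * (v ⬝ᵥ y) ^ 2 := by positivity
      linarith
  rw [hpsd.posDef_iff_det_ne_zero, det_bfgsUpdate hB hs hsy]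
  exact (mul_pos hB.det_pos (div_pos hsy hσ)).ne'

/-- One-step inequality for the potential `Ψ(K T B T)`. The trace changes by
`-w + K‖Ty‖²/sᵀy`, with `w = K‖TBs‖²/sᵀBs`; the second term is at most `1` by hypothesis, and `1 - w ≤ -log w`. -/
lemma Psi_bfgsUpdate_le {d : ℕ} {B T : Matrix (Fin d) (Fin d) ℝ} (hB : B.PosDef)
    (hT : T.PosDef) {K : ℝ} (hK : 0 < K) {s y : Fin d → ℝ} (hs : s ≠ 0) (hsy : 0 < s ⬝ᵥ y)
    (hy : K * ((T *ᵥ y) ⬝ᵥ (T *ᵥ y)) ≤ s ⬝ᵥ y) :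
    Psi d (K • (T * bfgsUpdate B s y * T)) ≤ Psi d (K • (T * B * T)) +
      Real.log ((s ⬝ᵥ (B *ᵥ s)) ^ 2 /
        (K * ((T *ᵥ (B *ᵥ s)) ⬝ᵥ (T *ᵥ (B *ᵥ s))) * (s ⬝ᵥ y))) := by
  have hσ := quad_pos hB hs
  have hBT : Bᵀ = B := by rw [← conjTranspose_eq_transpose_of_trivial]; exact hB.isHermitian
  have hTT : Tᵀ = T := by rw [← conjTranspose_eq_transpose_of_trivial]; exact hT.isHermitian
  have htr : ∀ a : Fin d → ℝ, (T * vecMulVec a a * T).trace = (T *ᵥ a) ⬝ᵥ (T *ᵥ a) := by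
    intro a
    rw [mul_vecMulVec, vecMulVec_mul, trace_vecMulVec, ← mulVec_transpose, hTT]
  have htrace : (K • (T * bfgsUpdate B s y * T)).trace = (K • (T * B * T)).trace
      - K * ((T *ᵥ (B *ᵥ s)) ⬝ᵥ (T *ᵥ (B *ᵥ s))) / (s ⬝ᵥ (B *ᵥ s))
      + K * ((T *ᵥ y) ⬝ᵥ (T *ᵥ y)) / (s ⬝ᵥ y) := by
    simp only [bfgsUpdate, hBT, mul_add, mul_sub, add_mul, sub_mul, mul_smul_comm, smul_mul_assoc,
      smul_add, smul_sub,
      trace_add, trace_sub, trace_smul, htr, smul_eq_mul]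
    ring
  have hTs : T *ᵥ (B *ᵥ s) ≠ 0 := by
    intro h
    have h1 := quad_pos hT (v := B *ᵥ s) (by rintro h0; simp [h0] at hσ)
    simp [h] at h1
  have hN : 0 < (T *ᵥ (B *ᵥ s)) ⬝ᵥ (T *ᵥ (B *ᵥ s)) := by
    have := quad_pos (PosDef.one (n := Fin d) (R := ℝ)) hTs
    simpa using this
  set N := (T *ᵥ (B *ᵥ s)) ⬝ᵥ (T *ᵥ (B *ᵥ s))
  set σ := s ⬝ᵥ (B *ᵥ s)
  set κ := s ⬝ᵥ y
  have hdet0 : 0 < (K • (T * B * T)).det := by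
    rw [det_smul, det_mul, det_mul]
    have := hT.det_pos; have := hB.det_pos
    positivity
  have hdet : (K • (T * bfgsUpdate B s y * T)).det = (K • (T * B * T)).det * (κ / σ) := by
    simp only [det_smul, det_mul, det_bfgsUpdate hB hs hsy]
    ring
  have hw : Real.log (K * N / σ) ≤ K * N / σ - 1 := Real.log_le_sub_one_of_pos (by positivity)
  have hy1 : K * ((T *ᵥ y) ⬝ᵥ (T *ᵥ y)) / κ ≤ 1 := (div_le_one hsy).2 hy
  have hlog : Real.log (σ ^ 2 / (K * N * κ)) = - Real.log (K * N / σ) - Real.log (κ / σ) := by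
    rw [← Real.log_inv, ← Real.log_div (by positivity) (by positivity)]
    congr 1
    field_simp
  rw [Psi, Psi, htrace, hdet, Real.log_mul hdet0.ne' (by positivity), hlog]
  linarith

/-! ### One-variable calculus -/

lemma monotoneOn_of_hasDerivAt {k k' : ℝ → ℝ}
    (hk : ∀ τ ∈ Set.Icc (0 : ℝ) 1, HasDerivAt k (k' τ) τ)
    (h0 : ∀ τ ∈ Set.Icc (0 : ℝ) 1, 0 ≤ k' τ) : MonotoneOn k (Set.Icc 0 1) := by
  refine monotoneOn_of_deriv_nonneg (convex_Icc 0 1)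
    (fun τ hτ => (hk τ hτ).continuousAt.continuousWithinAt)
    (fun τ hτ => (hk τ (interior_subset hτ)).differentiableAt.differentiableWithinAt)
    (fun τ hτ => ?_)
  rw [(hk τ (interior_subset hτ)).deriv]
  exact h0 τ (interior_subset hτ)

/-- A convex function on `[0, 1]` lies above its tangent lines at the two end points. -/
lemma tangent_bounds {k k' k'' : ℝ → ℝ}
    (hk : ∀ τ ∈ Set.Icc (0 : ℝ) 1, HasDerivAt k (k' τ) τ)
    (hk' : ∀ τ ∈ Set.Icc (0 : ℝ) 1, HasDerivAt k' (k'' τ) τ)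
    (h0 : ∀ τ ∈ Set.Icc (0 : ℝ) 1, 0 ≤ k'' τ) : k 0 + k' 0 ≤ k 1 ∧ k 1 ≤ k 0 + k' 1 := by
  have hm := monotoneOn_of_hasDerivAt hk' h0
  have z : (0 : ℝ) ∈ Set.Icc (0 : ℝ) 1 := by simp
  have o : (1 : ℝ) ∈ Set.Icc (0 : ℝ) 1 := by simp
  constructor
  · have := monotoneOn_of_hasDerivAt (k := fun τ => k τ - τ * k' 0) (k' := fun τ => k' τ - 1 * k' 0)
      (fun τ hτ => (hk τ hτ).sub ((hasDerivAt_id τ).mul_const _))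
      (fun τ hτ => by have := hm z hτ hτ.1; linarith) z o zero_le_one
    simp only at this
    linarith
  · have := monotoneOn_of_hasDerivAt (k := fun τ => τ * k' 1 - k τ) (k' := fun τ => 1 * k' 1 - k' τ)
      (fun τ hτ => ((hasDerivAt_id τ).mul_const _).sub (hk τ hτ))
      (fun τ hτ => by have := hm hτ o hτ.2; linarith) z o zero_le_one
    simp only at this
    linarith

lemma hasDerivAt_omegaFn {x : ℝ} (hx : 0 ≤ x) : HasDerivAt omegaFn (x / (1 + x)) x := by
  have h := (hasDerivAt_id x).sub (((hasDerivAt_id x).const_add 1).log (by simp; linarith))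
  have h1 : (1 : ℝ) + x ≠ 0 := by positivity
  have e : x / (1 + x) = 1 - 1 / (1 + x) := by field_simp; ring
  rw [e]
  exact h

lemma le_of_omegaFn_le {a b : ℝ} (ha : 0 ≤ a) (hb : 0 ≤ b) (h : omegaFn a ≤ omegaFn b) :
    a ≤ b := by
  by_contra! hlt
  have h1 : Real.log ((1 + a) / (1 + b)) < (1 + a) / (1 + b) - 1 :=
    Real.log_lt_sub_one_of_pos (by positivity) (by
      rw [Ne, div_eq_one_iff_eq (by positivity)]; linarith)
  rw [Real.log_div (by positivity) (by positivity)] at h1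
  have h2 : (1 + a) / (1 + b) - 1 ≤ a - b := by
    rw [div_sub_one (by positivity), div_le_iff₀ (by positivity)]
    nlinarith
  unfold omegaFn at h
  linarith

/-- `ω(x)/x²` is decreasing. -/
lemma sq_mul_omegaFn_le {p x : ℝ} (hp0 : 0 ≤ p) (hp1 : p ≤ 1) (hx : 0 ≤ x) :
    p ^ 2 * omegaFn x ≤ omegaFn (p * x) := by
  have lin : ∀ c τ : ℝ, HasDerivAt (fun τ : ℝ => τ * c) c τ := fun c τ => by
    simpa using (hasDerivAt_id τ).mul_const c
  have h := monotoneOn_of_hasDerivAt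
    (k := fun τ => omegaFn (τ * (p * x)) - p ^ 2 * omegaFn (τ * x))
    (k' := fun τ => τ * (p * x) / (1 + τ * (p * x)) * (p * x) -
      p ^ 2 * (τ * x / (1 + τ * x) * x))
    (fun τ hτ => by
      have := hτ.1
      exact ((hasDerivAt_omegaFn (by positivity)).comp τ (lin _ τ)).sub
        (((hasDerivAt_omegaFn (by positivity)).comp τ (lin _ τ)).const_mul _))
    (fun τ hτ => by
      have h0 := hτ.1
      have e1 : τ * (p * x) / (1 + τ * (p * x)) * (p * x) =
        p ^ 2 * (τ * x ^ 2) / (1 + τ * (p * x)) := by ring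
      have e2 : p ^ 2 * (τ * x / (1 + τ * x) * x) =
        p ^ 2 * (τ * x ^ 2) / (1 + τ * x) := by ring
      rw [e1, e2, sub_nonneg]
      refine div_le_div_of_nonneg_left (by positivity) (by positivity) ?_
      have : p * x ≤ 1 * x := mul_le_mul_of_nonneg_right hp1 hx
      have := mul_le_mul_of_nonneg_left this h0
      linarith)
    (show (0 : ℝ) ∈ Set.Icc (0 : ℝ) 1 by simp) (show (1 : ℝ) ∈ Set.Icc (0 : ℝ) 1 by simp)
    zero_le_one
  simp [omegaFn] at h
  simp only [omegaFn]
  linarith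

/-! ### Restrictions of `f` and its gradient to lines -/

lemma hasDerivAt_line {d : ℕ} (a v : Fin d → ℝ) (τ : ℝ) :
    HasDerivAt (fun τ : ℝ => a + τ • v) v τ := by
  simpa using ((hasDerivAt_id τ).smul_const v).const_add a

lemma hasDerivAt_f_line {d : ℕ} {f : (Fin d → ℝ) → ℝ} {grad : (Fin d → ℝ) → (Fin d → ℝ)}
    (hf : Differentiable ℝ f) (hgrad : ∀ x v, fderiv ℝ f x v = grad x ⬝ᵥ v)
    (a v : Fin d → ℝ) (τ : ℝ) :
    HasDerivAt (fun τ : ℝ => f (a + τ • v)) (grad (a + τ • v) ⬝ᵥ v) τ := by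
  have h := (hf (a + τ • v)).hasFDerivAt.comp_hasDerivAt τ (hasDerivAt_line a v τ)
  rwa [hgrad] at h

/-- The derivative hypothesis on `grad` alone forces differentiability: at a point where `grad` is
not differentiable `fderiv` vanishes, while a positive definite matrix annihilates no nonzero
vector. -/
lemma differentiable_grad {d : ℕ} {grad : (Fin d → ℝ) → (Fin d → ℝ)}
    {hess : (Fin d → ℝ) → Matrix (Fin d) (Fin d) ℝ}
    (hhess : ∀ x v, fderiv ℝ grad x v = hess x *ᵥ v) (hpd : ∀ x, (hess x).PosDef) :
    Differentiable ℝ grad := by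
  intro x
  by_contra hx
  have h0 : ∀ v, hess x *ᵥ v = 0 := fun v => by
    rw [← hhess, fderiv_zero_of_not_differentiableAt hx]; rfl
  have hv : ∀ v : Fin d → ℝ, v = 0 := fun v => by
    by_contra hv
    have := quad_pos (hpd x) hv
    simp [h0] at this
  have : Subsingleton (Fin d → ℝ) := ⟨fun a b => (hv a).trans (hv b).symm⟩
  exact hx (hasFDerivAt_of_subsingleton grad x).differentiableAt

lemma hasDerivAt_grad_line {d : ℕ} {grad : (Fin d → ℝ) → (Fin d → ℝ)}
    {hess : (Fin d → ℝ) → Matrix (Fin d) (Fin d) ℝ}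
    (hhess : ∀ x v, fderiv ℝ grad x v = hess x *ᵥ v) (hpd : ∀ x, (hess x).PosDef)
    (w a v : Fin d → ℝ) (τ : ℝ) :
    HasDerivAt (fun τ : ℝ => w ⬝ᵥ grad (a + τ • v)) (w ⬝ᵥ (hess (a + τ • v) *ᵥ v)) τ := by
  have h := (differentiable_grad hhess hpd (a + τ • v)).hasFDerivAt.comp_hasDerivAt τ
    (hasDerivAt_line a v τ)
  rw [hhess, hasDerivAt_pi] at h
  exact HasDerivAt.fun_sum fun i _ => (h i).const_mul (w i)

/-! ### Comparison of the Hessians with the Hessian at the minimizer -/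

lemma hess_le_of_dist {d : ℕ} {hess : (Fin d → ℝ) → Matrix (Fin d) (Fin d) ℝ} {M : ℝ}
    (hpd : ∀ x, (hess x).PosDef)
    (hssc : StronglySelfConcordant hess M) {a b z : Fin d → ℝ} {L : ℝ}
    (hL : M * Real.sqrt ((a - b) ⬝ᵥ (hess z *ᵥ (a - b))) ≤ L) (v : Fin d → ℝ) :
    v ⬝ᵥ (hess a *ᵥ v) ≤ (1 + L) * (v ⬝ᵥ (hess b *ᵥ v)) := by
  have h := quad_nonneg (hssc a b z) v
  have hb := quad_nonneg (hpd b).posSemidef v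
  simp only [sub_mulVec, smul_mulVec, dotProduct_sub, dotProduct_smul, smul_eq_mul] at h
  have := mul_le_mul_of_nonneg_right hL hb
  linarith

lemma hess_ge_of_dist {d : ℕ} {hess : (Fin d → ℝ) → Matrix (Fin d) (Fin d) ℝ} {M : ℝ}
    (hpd : ∀ x, (hess x).PosDef)
    (hssc : StronglySelfConcordant hess M) {a b z : Fin d → ℝ} {L : ℝ}
    (hL : M * Real.sqrt ((a - b) ⬝ᵥ (hess z *ᵥ (a - b))) ≤ L) (v : Fin d → ℝ) :
    v ⬝ᵥ (hess b *ᵥ v) ≤ (1 + L) * (v ⬝ᵥ (hess a *ᵥ v)) := by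
  refine hess_le_of_dist hpd hssc (z := z) ?_ v
  rwa [← neg_sub a b, mulVec_neg, neg_dotProduct_neg]

/-- The quadratic form `q(u) = uᵀAu` is convex, so `M√q` stays below `L` on a segment when it does
so at both ends. -/
lemma dist_segment_le {d : ℕ} {A : Matrix (Fin d) (Fin d) ℝ} (hA : A.PosSemidef) {M L : ℝ}
    (hM : 0 < M) (hL0 : 0 ≤ L) {a s : Fin d → ℝ} (ha : M * Real.sqrt (a ⬝ᵥ (A *ᵥ a)) ≤ L)
    (hb : M * Real.sqrt ((a + s) ⬝ᵥ (A *ᵥ (a + s))) ≤ L)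
    {τ : ℝ} (hτ : τ ∈ Set.Icc (0 : ℝ) 1) :
    M * Real.sqrt ((a + τ • s) ⬝ᵥ (A *ᵥ (a + τ • s))) ≤ L := by
  have hL' : 0 ≤ L / M := by positivity
  rw [mul_comm, ← le_div_iff₀ hM, Real.sqrt_le_left hL'] at ha hb ⊢
  have hs := quad_nonneg hA s
  have e := fun c : ℝ => quad_sub_smul hA.isHermitian a s (-c)
  simp only [neg_smul, sub_neg_eq_add] at e
  have e1 := e 1
  rw [one_smul] at e1
  rw [e1] at hb
  rw [e τ]
  obtain ⟨h0, h1⟩ := hτ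
  nlinarith [mul_le_mul_of_nonneg_left ha (sub_nonneg.2 h1), mul_le_mul_of_nonneg_left hb h0,
    mul_nonneg (mul_nonneg h0 (sub_nonneg.2 h1)) hs]

/-- Growth of a strongly self-concordant function away from its minimizer. Along the segment the
second derivative is at least `r²/(1 + Mrτ) ≥ r²/(1 + Mrτ/2)²`, and the right-hand side is the
second derivative of `(4/M²) ω(Mrτ/2)`. -/
lemma omegaFn_dist_le {d : ℕ} {f : (Fin d → ℝ) → ℝ} {grad : (Fin d → ℝ) → (Fin d → ℝ)}
    {hess : (Fin d → ℝ) → Matrix (Fin d) (Fin d) ℝ}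
    (hf : Differentiable ℝ f) (hgrad : ∀ x v, fderiv ℝ f x v = grad x ⬝ᵥ v)
    (hhess : ∀ x v, fderiv ℝ grad x v = hess x *ᵥ v) (hpd : ∀ x, (hess x).PosDef)
    {M : ℝ} (hM : 0 < M) (hssc : StronglySelfConcordant hess M)
    {xs : Fin d → ℝ} (hgs : ∀ v, grad xs ⬝ᵥ v = 0) (x : Fin d → ℝ) :
    omegaFn (M * Real.sqrt ((x - xs) ⬝ᵥ (hess xs *ᵥ (x - xs))) / 2) ≤
      M ^ 2 * (f x - f xs) / 4 := by
  set v := x - xs with hv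
  set r := Real.sqrt (v ⬝ᵥ (hess xs *ᵥ v)) with hr
  have hr0 : 0 ≤ r := Real.sqrt_nonneg _
  have hr2 : r ^ 2 = v ⬝ᵥ (hess xs *ᵥ v) := Real.sq_sqrt (quad_nonneg (hpd xs).posSemidef v)
  have lin : ∀ c τ : ℝ, HasDerivAt (fun τ : ℝ => τ * c) c τ := fun c τ => by
    simpa using (hasDerivAt_id τ).mul_const c
  have hpos : ∀ τ ∈ Set.Icc (0 : ℝ) 1, 0 ≤ τ * (M * r / 2) := fun τ hτ => by
    have := hτ.1; positivity
  have hg : ∀ z, grad z ⬝ᵥ v = v ⬝ᵥ grad z := fun z => dotProduct_comm _ _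
  have key := (tangent_bounds
    (k := fun τ => f (xs + τ • v) - 4 / M ^ 2 * omegaFn (τ * (M * r / 2)))
    (k' := fun τ => v ⬝ᵥ grad (xs + τ • v) -
      4 / M ^ 2 * (τ * (M * r / 2) / (1 + τ * (M * r / 2)) * (M * r / 2)))
    (k'' := fun τ => v ⬝ᵥ (hess (xs + τ • v) *ᵥ v) -
      4 / M ^ 2 * (((M * r / 2) * (1 + τ * (M * r / 2)) - τ * (M * r / 2) * (M * r / 2)) /
        (1 + τ * (M * r / 2)) ^ 2 * (M * r / 2)))
    (fun τ hτ => by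
      have h1 := hasDerivAt_f_line hf hgrad xs v τ
      rw [hg] at h1
      exact h1.sub (((hasDerivAt_omegaFn (hpos τ hτ)).comp τ (lin _ τ)).const_mul _))
    (fun τ hτ => by
      have hp := hpos τ hτ
      exact (hasDerivAt_grad_line hhess hpd v xs v τ).sub
        ((((lin _ τ).div ((lin _ τ).const_add 1) (by positivity)).mul_const _).const_mul _))
    (fun τ hτ => by
      have hp := hpos τ hτ
      have h0 := hτ.1
      have hd : M * Real.sqrt ((xs + τ • v - xs) ⬝ᵥ (hess xs *ᵥ (xs + τ • v - xs))) ≤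
          M * (τ * r) := by
        rw [add_sub_cancel_left, mulVec_smul, smul_dotProduct, dotProduct_smul, smul_eq_mul,
          smul_eq_mul, ← hr2, show τ * (τ * r ^ 2) = (τ * r) ^ 2 by ring,
          Real.sqrt_sq (by positivity)]
      have h2 := hess_ge_of_dist hpd hssc hd v
      rw [← hr2] at h2
      have e : 4 / M ^ 2 * (((M * r / 2) * (1 + τ * (M * r / 2)) - τ * (M * r / 2) * (M * r / 2)) /
        (1 + τ * (M * r / 2)) ^ 2 * (M * r / 2)) = r ^ 2 / (1 + τ * (M * r / 2)) ^ 2 := by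
        field_simp
        ring
      simp only [e]
      rw [sub_nonneg, div_le_iff₀ (by positivity)]
      have hq := quad_nonneg (hpd (xs + τ • v)).posSemidef v
      nlinarith [mul_nonneg hq (sq_nonneg (τ * (M * r / 2)))])).1
  have hx : xs + v = x := by rw [hv]; abel
  simp only [zero_smul, add_zero, one_smul, hx, zero_mul, one_mul, ← hg, hgs] at key
  have h0 : omegaFn 0 = 0 := by simp [omegaFn]
  rw [h0] at key
  simp only [mul_zero, sub_zero, zero_div, zero_mul, add_zero] at key
  have : omegaFn (M * r / 2) = M ^ 2 / 4 * (4 / M ^ 2 * omegaFn (M * r / 2)) := by field_simp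
  rw [this]
  have := mul_le_mul_of_nonneg_left (show 4 / M ^ 2 * omegaFn (M * r / 2) ≤ f x - f xs by linarith)
    (show 0 ≤ M ^ 2 / 4 by positivity)
  linarith

/-- A Polyak–Łojasiewicz inequality in the metric of `A`, where `w` stands for `A⁻¹∇f(x)`: if the
Hessians on the segment from the minimizer to `x` are at least `A / L`, then
`f(x) - f(xs) ≤ (L/2) ‖∇f(x)‖²` in the norm of `A⁻¹`. -/
lemma gap_le_grad {d : ℕ} {f : (Fin d → ℝ) → ℝ} {grad : (Fin d → ℝ) → (Fin d → ℝ)}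
    {hess : (Fin d → ℝ) → Matrix (Fin d) (Fin d) ℝ}
    (hf : Differentiable ℝ f) (hgrad : ∀ x v, fderiv ℝ f x v = grad x ⬝ᵥ v)
    (hhess : ∀ x v, fderiv ℝ grad x v = hess x *ᵥ v) (hpd : ∀ x, (hess x).PosDef)
    {A : Matrix (Fin d) (Fin d) ℝ} (hA : A.PosSemidef) {L : ℝ} (hL : 0 < L)
    {xs x w : Fin d → ℝ} (hw : A *ᵥ w = grad x)
    (hlow : ∀ τ ∈ Set.Icc (0 : ℝ) 1, ∀ v, v ⬝ᵥ (A *ᵥ v) ≤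
      L * (v ⬝ᵥ (hess (xs + τ • (x - xs)) *ᵥ v))) :
    f x - f xs ≤ L / 2 * (w ⬝ᵥ grad x) := by
  set v := x - xs with hv
  have hg : ∀ z, grad z ⬝ᵥ v = v ⬝ᵥ grad z := fun z => dotProduct_comm _ _
  set Q := v ⬝ᵥ (A *ᵥ v) with hQ
  have key := (tangent_bounds
    (k := fun τ => f (xs + τ • v) - Q / L * (τ ^ 2 / 2))
    (k' := fun τ => v ⬝ᵥ grad (xs + τ • v) - Q / L * τ)
    (k'' := fun τ => v ⬝ᵥ (hess (xs + τ • v) *ᵥ v) - Q / L * 1)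
    (fun τ _ => by
      have h1 := hasDerivAt_f_line hf hgrad xs v τ
      rw [hg] at h1
      have h2 : HasDerivAt (fun τ : ℝ => τ ^ 2 / 2) τ τ := by
        have := (hasDerivAt_pow 2 τ).div_const 2
        simpa using this
      exact h1.sub (h2.const_mul _))
    (fun τ _ => (hasDerivAt_grad_line hhess hpd v xs v τ).sub ((hasDerivAt_id τ).const_mul _))
    (fun τ hτ => by
      have := hlow τ hτ v
      rw [← hQ, ← div_le_iff₀' hL] at this
      linarith)).2
  have hx : xs + v = x := by rw [hv]; abel
  simp only [zero_smul, add_zero, one_smul, hx] at key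
  have hy := quad_young hA v w L
  rw [hw, ← hQ] at hy
  have h3 : f x - f xs ≤ v ⬝ᵥ grad x - Q / L / 2 := by linarith
  have h4 : v ⬝ᵥ grad x - Q / L / 2 ≤ L / 2 * (w ⬝ᵥ grad x) := by
    have : L * (v ⬝ᵥ grad x - Q / L / 2) ≤ L * (L / 2 * (w ⬝ᵥ grad x)) := by
      have e : L * (v ⬝ᵥ grad x - Q / L / 2) = L * (v ⬝ᵥ grad x) - Q / 2 := by field_simp
      rw [e]
      nlinarith
    exact le_of_mul_le_mul_left this hL
  linarith

/-- Cocoercivity in the metric of `A`, where `w` stands for `A⁻¹y`: if the Hessians on the segment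
`[a, a + s]` are at most `L A`, then `yᵀA⁻¹y ≤ L sᵀy`. -/
lemma gradDiff_cocoercive {d : ℕ} {grad : (Fin d → ℝ) → (Fin d → ℝ)}
    {hess : (Fin d → ℝ) → Matrix (Fin d) (Fin d) ℝ}
    (hhess : ∀ x v, fderiv ℝ grad x v = hess x *ᵥ v) (hpd : ∀ x, (hess x).PosDef)
    {A : Matrix (Fin d) (Fin d) ℝ} {L : ℝ} (hL : 0 < L)
    {a s w : Fin d → ℝ} (hw : A *ᵥ w = grad (a + s) - grad a)
    (hup : ∀ τ ∈ Set.Icc (0 : ℝ) 1, ∀ v, v ⬝ᵥ (hess (a + τ • s) *ᵥ v) ≤ L * (v ⬝ᵥ (A *ᵥ v))) :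
    w ⬝ᵥ (grad (a + s) - grad a) ≤ L * (s ⬝ᵥ (grad (a + s) - grad a)) := by
  -- Integrate `0 ≤ (w - L s)ᵀ H (w - L s) ≤ L wᵀAw - 2L wᵀHs + L² sᵀHs` along the segment.
  have key := monotoneOn_of_hasDerivAt
    (k := fun τ => τ * (L * (w ⬝ᵥ (A *ᵥ w))) + L ^ 2 * (s ⬝ᵥ grad (a + τ • s))
      - 2 * L * (w ⬝ᵥ grad (a + τ • s)))
    (k' := fun τ => 1 * (L * (w ⬝ᵥ (A *ᵥ w))) + L ^ 2 * (s ⬝ᵥ (hess (a + τ • s) *ᵥ s))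
      - 2 * L * (w ⬝ᵥ (hess (a + τ • s) *ᵥ s)))
    (fun τ _ => (((hasDerivAt_id τ).mul_const _).add
      ((hasDerivAt_grad_line hhess hpd s a s τ).const_mul _)).sub
      ((hasDerivAt_grad_line hhess hpd w a s τ).const_mul _))
    (fun τ hτ => by
      have h1 := quad_young (hpd (a + τ • s)).posSemidef w s L
      have h2 := hup τ hτ w
      linarith)
    (show (0 : ℝ) ∈ Set.Icc (0 : ℝ) 1 by simp) (show (1 : ℝ) ∈ Set.Icc (0 : ℝ) 1 by simp)
    zero_le_one
  simp only [zero_smul, add_zero, one_smul, hw, zero_mul, one_mul, zero_add, dotProduct_sub] at key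
  simp only [dotProduct_sub]
  refine le_of_mul_le_mul_left ?_ hL
  nlinarith

/-! ### Summation -/

/-- If `aᵢ ≤ 1` always and `aᵢ ≤ qⁱ` once `i ≥ ψ`, then `∑ aᵢ ≤ ψ + 1/(1-q)`: compared with the
geometric series, each of the indices `1 ≤ i < ψ` costs at most `1`, and `i = 0` costs nothing. -/
lemma sum_le_of_eventually_geometric {a : ℕ → ℝ} {q ψ : ℝ} (hq0 : 0 < q) (hq1 : q < 1)
    (hψ : 0 ≤ ψ) (h1 : ∀ i, a i ≤ 1) (h2 : ∀ i : ℕ, ψ ≤ i → a i ≤ q ^ i) (t : ℕ) :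
    ∑ i ∈ Finset.range t, a i ≤ ψ + 1 / (1 - q) := by
  have hgeo : ∑ i ∈ Finset.range t, q ^ i ≤ 1 / (1 - q) := by
    rw [one_div, ← tsum_geometric_of_lt_one hq0.le hq1]
    exact (summable_geometric_of_lt_one hq0.le hq1).sum_le_tsum _ fun i _ => by positivity
  have hcount : ∀ t : ℕ, ∑ i ∈ Finset.range t, (a i - q ^ i) ≤ ψ := by
    intro t
    have hle : ∑ i ∈ Finset.range t, (a i - q ^ i) ≤
        ∑ i ∈ Finset.range t, (if 0 < i ∧ (i : ℝ) < ψ then (1 : ℝ) else 0) := by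
      refine Finset.sum_le_sum fun i _ => ?_
      split_ifs with h
      · have := h1 i
        have : 0 < q ^ i := by positivity
        linarith
      · rcases Nat.eq_zero_or_pos i with rfl | hi
        · have := h1 0; simp; linarith
        · have := h2 i (not_lt.1 fun hlt => h ⟨hi, hlt⟩); linarith
    refine hle.trans ?_
    rw [Finset.sum_boole]
    have hsub : (Finset.range t).filter (fun i : ℕ => 0 < i ∧ (i : ℝ) < ψ) ⊆
        Finset.Ioc 0 ⌊ψ⌋₊ := by
      intro i hi
      simp only [Finset.mem_filter, Finset.mem_Ioc] at hi ⊢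
      exact ⟨hi.2.1, Nat.le_floor hi.2.2.le⟩
    have := Finset.card_le_card hsub
    rw [Nat.card_Ioc, Nat.sub_zero] at this
    exact (Nat.cast_le.2 this).trans (Nat.floor_le hψ)
  have := hcount t
  rw [Finset.sum_sub_distrib] at this
  linarith

/-- With `q = 1 - ρ/3`, the bounds `1 + x ≤ eˣ` and `u - 1/3 ≥ (1 + log u)/3` give
`√(1 - 2ρu) ≤ 1 - ρu ≤ q exp(-(ρ/3q)(1 + log u))`, which is stated here in squared form. -/
lemma one_sub_le_exp {ρ u : ℝ} (hρ0 : 0 < ρ) (hρ1 : ρ < 1) (hu : 0 < u)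
    (h : 0 ≤ 1 - 2 * ρ * u) :
    1 - 2 * ρ * u ≤ (1 - ρ / 3) ^ 2 *
      Real.exp (2 * ρ / (3 * (1 - ρ / 3)) * (-1 - Real.log u)) := by
  have hq : 0 < 1 - ρ / 3 := by linarith
  set q := 1 - ρ / 3 with hqd
  have hlog : 1 + Real.log u ≤ 3 * u - 1 := by
    have h3 : (1 : ℝ) ≤ Real.log 3 := by
      rw [Real.le_log_iff_exp_le (by norm_num)]
      linarith [Real.exp_one_lt_d9]
    have := Real.log_le_sub_one_of_pos (show 0 < 3 * u by positivity)
    rw [Real.log_mul (by norm_num) hu.ne'] at this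
    linarith
  have hexp : 1 - ρ * u ≤ q * Real.exp (ρ / (3 * q) * (-1 - Real.log u)) := by
    have h1 := Real.add_one_le_exp (ρ / (3 * q) * (-1 - Real.log u))
    have h2 := mul_le_mul_of_nonneg_left h1 hq.le
    have h3 : q * (ρ / (3 * q) * (-1 - Real.log u) + 1) =
        ρ / 3 * (-1 - Real.log u) + q := by field_simp
    have h4 := mul_le_mul_of_nonneg_left hlog (show 0 ≤ ρ / 3 by positivity)
    linarith
  have h0 : 0 ≤ 1 - ρ * u := by linarith
  calc 1 - 2 * ρ * u ≤ (1 - ρ * u) ^ 2 := by nlinarith [sq_nonneg (ρ * u)]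
    _ ≤ (q * Real.exp (ρ / (3 * q) * (-1 - Real.log u))) ^ 2 := by gcongr
    _ = _ := by
      rw [mul_pow, ← Real.exp_nat_mul]
      congr 2
      push_cast
      ring

/-- Bound on the sum of the suboptimality measures `D_i` (inequality (44)). -/
theorem bfgs_sum_D_bound {d : ℕ}
    (f : (Fin d → ℝ) → ℝ)
    (grad : (Fin d → ℝ) → (Fin d → ℝ))
    (hess : (Fin d → ℝ) → Matrix (Fin d) (Fin d) ℝ)
    (hf : ContDiff ℝ 2 f)
    (hgrad : ∀ x v, fderiv ℝ f x v = grad x ⬝ᵥ v)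
    (hhess : ∀ x v, fderiv ℝ grad x v = hess x *ᵥ v)
    (hpd : ∀ x, (hess x).PosDef)
    (M : ℝ) (hM : 0 < M)
    (hssc : StronglySelfConcordant hess M)
    (xstar : Fin d → ℝ) (hmin : ∀ y, f xstar ≤ f y)
    (α β : ℝ) (hα0 : 0 < α) (hα : α < 1/2) (hαβ : α < β) (hβ : β < 1)
    (x : ℕ → Fin d → ℝ) (B : ℕ → Matrix (Fin d) (Fin d) ℝ) (η : ℕ → ℝ)
    (hB0symm : (B 0).IsSymm) (hB0pd : (B 0).PosDef)
    (hx0 : f xstar < f (x 0))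
    (hη : ∀ t, 0 < η t)
    (hxupd : ∀ t, x (t+1) = x t + η t • (-((B t)⁻¹ *ᵥ grad (x t))))
    (hBupd : ∀ t, B (t+1) = bfgsUpdate (B t) (x (t+1) - x t) (grad (x (t+1)) - grad (x t)))
    (hAW1 : ∀ t, f (x (t+1)) ≤
      f (x t) + α * η t * (grad (x t) ⬝ᵥ (-((B t)⁻¹ *ᵥ grad (x t)))))
    (hAW2 : ∀ t, grad (x (t+1)) ⬝ᵥ (-((B t)⁻¹ *ᵥ grad (x t))) ≥
      β * (grad (x t) ⬝ᵥ (-((B t)⁻¹ *ᵥ grad (x t)))))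
    (C : ℕ → ℝ) (hC : ∀ t, C t = f (x t) - f xstar)
    (D : ℕ → ℝ) (hD : ∀ t, 0 ≤ D t ∧ omegaFn (D t / 2) = M ^ 2 * C t / 4)
    (S : Matrix (Fin d) (Fin d) ℝ) (hSpd : S.PosDef) (hSsq : S * S = hess xstar)
    (Bbar : Matrix (Fin d) (Fin d) ℝ)
    (hBbar : Bbar = (1 + D 0)⁻¹ • (S⁻¹ * B 0 * S⁻¹))
    (t : ℕ) (ht : 1 ≤ t) :
    ∑ i ∈ Finset.range t, D i ≤
      D 0 * (Psi d Bbar + 3 * (1 + D 0) ^ 2 / (α * (1 - β))) := by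
  have hfd : Differentiable ℝ f := hf.differentiable (by norm_num)
  have hgs : ∀ v, grad xstar ⬝ᵥ v = 0 := fun v => by
    have h0 : fderiv ℝ f xstar = 0 :=
      IsLocalMin.fderiv_eq_zero (Filter.Eventually.of_forall hmin)
    rw [← hgrad, h0]; rfl
  have hC0 : ∀ i, 0 ≤ C i := fun i => by rw [hC]; linarith [hmin (x i)]
  have hD0 : 0 < D 0 := by
    refine lt_of_le_of_ne (hD 0).1 fun h => ?_
    have h1 := (hD 0).2
    rw [← h, hC] at h1
    simp only [omegaFn, zero_div, add_zero, Real.log_one, sub_zero] at h1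
    have : 0 < M ^ 2 * (f (x 0) - f xstar) / 4 := by
      have := sub_pos.2 hx0; positivity
    linarith
  have hDscale : ∀ (i : ℕ) (p : ℝ), 0 ≤ p → p ≤ 1 → C i ≤ p ^ 2 * C 0 → D i ≤ p * D 0 := by
    intro i p hp0 hp1 h
    have h1 := sq_mul_omegaFn_le hp0 hp1 (show 0 ≤ D 0 / 2 by linarith)
    rw [(hD 0).2] at h1
    have h2 : M ^ 2 * C i / 4 ≤ p ^ 2 * (M ^ 2 * C 0 / 4) := by
      have := mul_le_mul_of_nonneg_left h (show 0 ≤ M ^ 2 / 4 by positivity)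
      linarith
    rw [← (hD i).2] at h2
    have h3 := le_of_omegaFn_le (by linarith [(hD i).1]) (by positivity) (h2.trans h1)
    linarith
  have hDmono : ∀ i, C i ≤ C 0 → D i ≤ D 0 := fun i h => by
    simpa using hDscale i 1 zero_le_one le_rfl (by simpa using h)
  -- The iterates stay in the ball of radius `D 0 / M` about the minimizer, in its local norm.
  have hdist : ∀ i, C i ≤ C 0 →
      M * Real.sqrt ((x i - xstar) ⬝ᵥ (hess xstar *ᵥ (x i - xstar))) ≤ D 0 := by
    intro i h
    have h1 := omegaFn_dist_le hfd hgrad hhess hpd hM hssc hgs (x i)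
    rw [← hC, ← (hD i).2] at h1
    have h2 := le_of_omegaFn_le (by positivity) (by linarith [(hD i).1]) h1
    linarith [hDmono i h]
  set L := 1 + D 0 with hL
  have hL0 : 0 < L := by linarith
  have hTpd : (S⁻¹).PosDef := hSpd.inv
  set T := S⁻¹ with hT
  have hSu : IsUnit S.det := hSpd.det_pos.ne'.isUnit
  -- `T (T a)` is `∇²f(xstar)⁻¹ a`.
  have hHT : ∀ a, hess xstar *ᵥ (T *ᵥ (T *ᵥ a)) = a := fun a => by
    rw [← hSsq, mulVec_mulVec, mulVec_mulVec, Matrix.mul_assoc S S T, hT, mul_nonsing_inv _ hSu,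
      Matrix.mul_one, mul_nonsing_inv _ hSu, one_mulVec]
  have hTT : ∀ a, (T *ᵥ (T *ᵥ a)) ⬝ᵥ a = (T *ᵥ a) ⬝ᵥ (T *ᵥ a) := fun a => by
    rw [dotProduct_comm, dot_mulVec_symm hTpd.isHermitian]
  have hHpsd := (hpd xstar).posSemidef
  set Φ : ℕ → ℝ := fun i => Psi d (L⁻¹ • (T * B i * T)) with hΦ
  have hΦ0 : Φ 0 = Psi d Bbar := by rw [hΦ, hBbar]
  have hΦnn : ∀ i, (B i).PosDef → 0 ≤ Φ i := fun i hB => by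
    refine Psi_nonneg (PosDef.smul ?_ (inv_pos.2 hL0))
    have := hB.conjTranspose_mul_mul_same (B := T)
      (mulVec_injective_iff_isUnit.2 hTpd.isUnit)
    rwa [hTpd.isHermitian.eq] at this
  set ρ := α * (1 - β) / L ^ 2 with hρ
  have hβ1 : 0 < 1 - β := by linarith
  have hρ0 : 0 < ρ := by positivity
  have hρ1 : ρ < 1 := by
    rw [hρ, div_lt_one (by positivity)]
    nlinarith
  set q := 1 - ρ / 3 with hq
  have hq0 : 0 < q := by linarith
  set c := 2 * ρ / (3 * q) with hc
  have hc0 : 0 < c := by positivity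
  -- Linear decrease of the objective, with the potential as a credit.
  have main : ∀ i, (B i).PosDef ∧ C i ≤ C 0 ∧
      C i ≤ C 0 * (q ^ 2) ^ i * Real.exp (c * (Φ 0 - Φ i - i)) := by
    intro i
    induction i with
    | zero => simp [hB0pd]
    | succ i ih =>
      obtain ⟨hB, hCi, hCe⟩ := ih
      set g := grad (x i) with hg
      set G := g ⬝ᵥ ((B i)⁻¹ *ᵥ g) with hG
      have hBu : IsUnit (B i).det := hB.det_pos.ne'.isUnit
      have hGnn : 0 ≤ G := quad_nonneg hB.inv.posSemidef g
      have hdec : C (i + 1) ≤ C i - α * (η i * G) := by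
        have := hAW1 i
        rw [hC, hC]
        rw [dotProduct_neg] at this
        linarith
      have hηi := hη i
      have hCmono : C (i + 1) ≤ C i := by
        have : 0 ≤ α * (η i * G) := by positivity
        linarith
      have hCi1 : C (i + 1) ≤ C 0 := hCmono.trans hCi
      -- Once the minimum is attained the bound is trivial.
      have triv : C i ≤ 0 →
          C (i + 1) ≤ C 0 * (q ^ 2) ^ (i + 1) * Real.exp (c * (Φ 0 - Φ (i + 1) - (i + 1 : ℕ))) := by
        intro h
        have := hC0 0
        exact (hCmono.trans h).trans (by positivity)
      set N := (T *ᵥ g) ⬝ᵥ (T *ᵥ g) with hN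
      have hgap : C i ≤ L / 2 * N := by
        have := gap_le_grad hfd hgrad hhess hpd hHpsd hL0 (xs := xstar) (hHT g) (fun τ hτ v => by
          refine hess_ge_of_dist hpd hssc (z := xstar) ?_ v
          have h := dist_segment_le hHpsd hM hD0.le (a := 0) (s := x i - xstar)
            (by simpa using hD0.le) (by simpa using hdist i hCi) hτ
          rwa [add_sub_cancel_left, ← zero_add (τ • (x i - xstar))])
        rwa [← hC, hTT] at this
      set s := x (i + 1) - x i with hs
      set y := grad (x (i + 1)) - g with hy
      have hsd : s = η i • (-((B i)⁻¹ *ᵥ g)) := by rw [hs, hxupd i]; abel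
      have hBup : B (i + 1) = bfgsUpdate (B i) s y := hBupd i
      by_cases hg0 : g = 0
      · have hs0 : s = 0 := by rw [hsd, hg0]; simp
        have hx1 : x (i + 1) = x i := sub_eq_zero.1 hs0
        have hy0 : y = 0 := by rw [hy, hx1, ← hg, sub_self]
        refine ⟨?_, hCi1, triv ?_⟩
        · have : bfgsUpdate (B i) s y = B i := by
            rw [hs0, hy0]; simp [bfgsUpdate]
          rw [hBup, this]; exact hB
        · rw [hN, hg0] at hgap
          simpa using hgap
      have hGpos : 0 < G := quad_pos hB.inv hg0
      have hBs : B i *ᵥ s = (-η i) • g := by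
        rw [hsd, mulVec_smul, mulVec_neg, mulVec_mulVec, mul_nonsing_inv _ hBu, one_mulVec,
          smul_neg, neg_smul]
      have hσ : s ⬝ᵥ (B i *ᵥ s) = η i ^ 2 * G := by
        rw [hBs, hsd, dotProduct_smul, smul_dotProduct, neg_dotProduct, dotProduct_comm, ← hG]
        simp only [smul_eq_mul]
        ring
      have hs0 : s ≠ 0 := by
        intro h
        have : 0 < η i ^ 2 * G := by positivity
        rw [← hσ, h] at this
        simp at this
      have hκ : η i * (1 - β) * G ≤ s ⬝ᵥ y := by
        have h := hAW2 i
        rw [ge_iff_le, dotProduct_neg, dotProduct_neg] at h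
        have e : s ⬝ᵥ y = η i * (-(grad (x (i + 1)) ⬝ᵥ ((B i)⁻¹ *ᵥ g)) + G) := by
          rw [hsd, hy, dotProduct_sub, smul_dotProduct, smul_dotProduct, neg_dotProduct,
            neg_dotProduct, dotProduct_comm _ (grad _), dotProduct_comm _ g, ← hG]
          simp only [smul_eq_mul]
          ring
        rw [e, mul_assoc]
        refine mul_le_mul_of_nonneg_left ?_ hηi.le
        rw [← hg, ← hG] at h
        linarith
      have hκ0 : 0 < s ⬝ᵥ y := lt_of_lt_of_le (by positivity) hκ
      have hxs : x i + s = x (i + 1) := by rw [hs]; abel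
      have hcoc : (T *ᵥ y) ⬝ᵥ (T *ᵥ y) ≤ L * (s ⬝ᵥ y) := by
        have h := gradDiff_cocoercive hhess hpd hL0 (A := hess xstar) (a := x i) (s := s)
          (w := T *ᵥ (T *ᵥ y)) (by rw [hHT, hxs, hy]) (fun τ hτ v => by
            refine hess_le_of_dist hpd hssc (z := xstar) ?_ v
            have h := dist_segment_le hHpsd hM hD0.le (a := x i - xstar) (s := s)
              (hdist i hCi) (by
                have e : x i - xstar + s = x (i + 1) - xstar := by rw [← hxs]; abel
                rw [e]; exact hdist (i + 1) hCi1) hτ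
            have e : x i + τ • s - xstar = x i - xstar + τ • s := by abel
            rwa [e])
        rw [hxs, ← hg, ← hy, hTT] at h
        exact h
      have hΦstep := Psi_bfgsUpdate_le hB hTpd (inv_pos.2 hL0) hs0 hκ0
        (by rwa [inv_mul_le_iff₀ hL0])
      have hB1 : (B (i + 1)).PosDef := by rw [hBup]; exact posDef_bfgsUpdate hB hs0 hκ0
      refine ⟨hB1, hCi1, ?_⟩
      rcases le_or_gt (C i) 0 with hz | hCpos
      · exact triv hz
      have hNpos : 0 < N := by
        by_contra! h
        nlinarith
      set κ := s ⬝ᵥ y with hκd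
      -- `u = cos²θ / m` in the metric of `L ∇²f(xstar)`.
      set u := η i ^ 2 * G ^ 2 / (L⁻¹ * N * κ) with hu
      have hupos : 0 < u := by positivity
      have hueq : (s ⬝ᵥ (B i *ᵥ s)) ^ 2 /
          (L⁻¹ * ((T *ᵥ (B i *ᵥ s)) ⬝ᵥ (T *ᵥ (B i *ᵥ s))) * κ) = u := by
        rw [hσ, hBs, mulVec_smul, smul_dotProduct, dotProduct_smul, ← hN, hu]
        simp only [smul_eq_mul]
        field_simp
      rw [hueq, ← hBup] at hΦstep
      have hΦu : Φ (i + 1) - Φ i ≤ Real.log u := by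
        simp only [hΦ]; linarith
      have huη : (1 - β) * (L⁻¹ * N) * u ≤ η i * G := by
        have e : (1 - β) * (L⁻¹ * N) * u = η i * G * (η i * (1 - β) * G / κ) := by
          rw [hu]; field_simp
        rw [e]
        exact mul_le_of_le_one_right (by positivity) ((div_le_one hκ0).2 hκ)
      have hdecu : C (i + 1) ≤ C i * (1 - 2 * ρ * u) := by
        have h1 : 2 * ρ * u * C i ≤ 2 * ρ * u * (L / 2 * N) :=
          mul_le_mul_of_nonneg_left hgap (by positivity)
        have h2 : 2 * ρ * u * (L / 2 * N) = α * ((1 - β) * (L⁻¹ * N) * u) := by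
          rw [hρ]; field_simp
        have h3 := mul_le_mul_of_nonneg_left huη hα0.le
        linarith
      have h1u : 0 ≤ 1 - 2 * ρ * u := by
        by_contra! h
        have := mul_neg_of_pos_of_neg hCpos h
        linarith [hC0 (i + 1)]
      have hstep : 1 - 2 * ρ * u ≤ q ^ 2 * Real.exp (c * (-1 - (Φ (i + 1) - Φ i))) := by
        refine (one_sub_le_exp hρ0 hρ1 hupos h1u).trans ?_
        rw [← hq, ← hc]
        gcongr
      calc C (i + 1) ≤ C i * (1 - 2 * ρ * u) := hdecu
        _ ≤ (C 0 * (q ^ 2) ^ i * Real.exp (c * (Φ 0 - Φ i - i))) *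
            (q ^ 2 * Real.exp (c * (-1 - (Φ (i + 1) - Φ i)))) :=
          mul_le_mul hCe hstep h1u ((hC0 i).trans hCe)
        _ = C 0 * (q ^ 2) ^ (i + 1) * (Real.exp (c * (Φ 0 - Φ i - i)) *
            Real.exp (c * (-1 - (Φ (i + 1) - Φ i)))) := by ring
        _ = _ := by
          rw [← Real.exp_add]
          congr 2
          push_cast
          ring
  have hsum := sum_le_of_eventually_geometric (a := fun i => D i / D 0) (q := q) (ψ := Φ 0)
    hq0 (by linarith) (hΦnn 0 hB0pd)
    (fun i => (div_le_one hD0).2 (hDmono i (main i).2.1))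
    (fun i hi => by
      rw [div_le_iff₀ hD0]
      refine hDscale i _ (by positivity) (pow_le_one₀ hq0.le (by linarith)) ?_
      refine (main i).2.2.trans ?_
      have h1 : Real.exp (c * (Φ 0 - Φ i - i)) ≤ 1 := by
        rw [Real.exp_le_one_iff]
        have := hΦnn i (main i).1
        exact mul_nonpos_of_nonneg_of_nonpos hc0.le (by linarith)
      have h2 : 0 ≤ C 0 * (q ^ 2) ^ i := by have := hC0 0; positivity
      calc _ ≤ C 0 * (q ^ 2) ^ i * 1 := mul_le_mul_of_nonneg_left h1 h2
        _ = (q ^ i) ^ 2 * C 0 := by ring) t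
  have hρ3 : 1 / (1 - q) = 3 * L ^ 2 / (α * (1 - β)) := by
    rw [hq, sub_sub_cancel, hρ]
    field_simp
  rw [← Finset.sum_div, div_le_iff₀' hD0, hρ3, hΦ0] at hsum
  exact hsum
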